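/- Let A,B,C,D,p,q be real numbers with AD−BC=1 and B≠0, and let 0 ≤ α < 1. For every Schwartz function f on ℝ, the Pitt inequality for the SAFT holds: |B|^α ∫_ℝ |ω|^{−α} |f̂_Λ(ω)|² dω ≤ C_α ∫_ℝ |x|^α |f(x)|² dx, where C_α = π^α · [ Γ((1−α)/4) / Γ((1+α)/4) ]² and Γ denotes the Euler gamma function. -/

import Mathlib

open MeasureTheory Real Set

/-- The special affine Fourier transform (SAFT) with parameter matrix
`[[A, B], [C, D]]` and offset `(p, q)` (the kernel does not involve `C`). -/
noncomputable def SAFT (A B D p q : ℝ) (f : ℝ → ℂ) (ω : ℝ) : ℂ :=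
  (Real.sqrt (2 * Real.pi * |B|) : ℂ)⁻¹ *
    ∫ x : ℝ, f x * Complex.exp ((Complex.I / (2 * (B : ℂ))) *
      ((A : ℂ) * (x : ℂ) ^ 2 + 2 * (x : ℂ) * ((p : ℂ) - (ω : ℂ))
        - 2 * (ω : ℂ) * ((D : ℂ) * (p : ℂ) - (B : ℂ) * (q : ℂ))
        + (D : ℂ) * (ω : ℂ) ^ 2))


open scoped ENNReal FourierTransform

namespace SaftPitt

/-- Heat kernel. -/
noncomputable def h (t x : ℝ) : ℝ := t ^ (-(1/2) : ℝ) * Real.exp (-Real.pi * x ^ 2 / t)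

lemma h_nonneg {t : ℝ} (ht : 0 < t) (x : ℝ) : 0 ≤ h t x := by unfold h; positivity

lemma h_meas : Measurable (fun z : ℝ × ℝ => h z.1 z.2) := by unfold h; fun_prop

lemma lint_of_integral {μ : Measure ℝ} {F : ℝ → ℝ} {c : ℝ} (hc : c ≠ 0)
    (hF : 0 ≤ᵐ[μ] F) (hi : ∫ t, F t ∂μ = c) :
    ∫⁻ t, ENNReal.ofReal (F t) ∂μ = ENNReal.ofReal c := by
  have hFint : Integrable F μ := by
    by_contra H
    rw [integral_undef H] at hi
    exact hc hi.symm
  rw [← hi, ofReal_integral_eq_lintegral_ofReal hFint hF]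

lemma gamma_lint {a c : ℝ} (ha : 0 < a) (hc : 0 < c) :
    ∫⁻ t in Ioi (0:ℝ), ENNReal.ofReal (t ^ (a - 1) * Real.exp (-(c * t))) =
      ENNReal.ofReal (Real.Gamma a * c ^ (-a)) := by
  have hG := Real.Gamma_pos_of_pos ha
  apply lint_of_integral (by positivity)
  · filter_upwards [self_mem_ae_restrict measurableSet_Ioi] with t ht
    have : (0:ℝ) < t := ht
    simp only [Pi.zero_apply]; positivity
  · rw [Real.integral_rpow_mul_exp_neg_mul_Ioi ha hc, one_div, Real.inv_rpow hc.le,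
      Real.rpow_neg hc.le, mul_comm]

lemma R_lint {a : ℝ} (ha : a < 1 / 2) {x : ℝ} (hx : x ≠ 0) :
    ∫⁻ t in Ioi (0:ℝ), ENNReal.ofReal (t ^ (a - 1) * h t x) =
      ENNReal.ofReal (Real.Gamma (1/2 - a) * (Real.pi * x ^ 2) ^ (a - 1/2)) := by
  have hG := Real.Gamma_pos_of_pos (show 0 < 1/2 - a by linarith)
  have hc : 0 < Real.pi * x ^ 2 := by positivity
  apply lint_of_integral (by positivity)
  · filter_upwards [self_mem_ae_restrict measurableSet_Ioi] with t ht
    have : (0:ℝ) < t := ht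
    have := h_nonneg this x
    simp only [Pi.zero_apply]; positivity
  · have h1 := Real.integral_rpow_mul_exp_neg_mul_Ioi (show 0 < 1/2 - a by linarith) hc
    rw [← integral_comp_rpow_Ioi _ (show (-1:ℝ) ≠ 0 by norm_num)] at h1
    rw [one_div (Real.pi * x ^ 2), Real.inv_rpow hc.le, ← Real.rpow_neg hc.le, neg_sub] at h1
    rw [mul_comm (Real.Gamma _), ← h1]
    apply setIntegral_congr_fun measurableSet_Ioi
    intro t ht
    have ht : (0:ℝ) < t := ht
    simp only [h, smul_eq_mul]
    rw [← mul_assoc, ← mul_assoc, ← Real.rpow_mul ht.le, ← Real.rpow_add ht, abs_neg, abs_one,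
      one_mul, ← Real.rpow_add ht, Real.rpow_neg_one]
    congr 2
    · ring
    · field_simp

lemma heat_semigroup {t s : ℝ} (ht : 0 < t) (hs : 0 < s) (y : ℝ) :
    ∫⁻ x, ENNReal.ofReal (h t (y - x) * h s x) = ENNReal.ofReal (h (t + s) y) := by
  apply lint_of_integral
  · unfold h; positivity
  · filter_upwards with x
    exact mul_nonneg (h_nonneg ht _) (h_nonneg hs _)
  · have key : ∀ x, h t (y - x) * h s x =
        (t ^ (-(1/2) : ℝ) * s ^ (-(1/2) : ℝ) * Real.exp (-Real.pi * y ^ 2 / (t + s))) *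
          Real.exp (-(Real.pi * (t + s) / (t * s)) * (x - s * y / (t + s)) ^ 2) := by
      intro x
      unfold h
      rw [mul_mul_mul_comm, ← Real.exp_add, mul_assoc (t ^ (-(1/2) : ℝ) * s ^ (-(1/2) : ℝ)),
        ← Real.exp_add]
      congr 2
      field_simp
      ring
    simp_rw [key]
    rw [integral_const_mul, integral_sub_right_eq_self (fun x => Real.exp (-(Real.pi * (t + s) / (t * s)) * x ^ 2)),
      integral_gaussian]
    have : Real.pi / (Real.pi * (t + s) / (t * s)) = t * s * (t + s)⁻¹ := by
      field_simp
    rw [this, Real.sqrt_eq_rpow, Real.mul_rpow (by positivity) (by positivity),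
      Real.mul_rpow ht.le hs.le, Real.inv_rpow (by positivity), ← Real.rpow_neg (by positivity)]
    unfold h
    rw [Real.rpow_neg ht.le, Real.rpow_neg hs.le]
    have h1 : 0 < t ^ (1/2:ℝ) := by positivity
    have h2 : 0 < s ^ (1/2:ℝ) := by positivity
    field_simp

lemma h_total {t : ℝ} (ht : 0 < t) (y : ℝ) :
    ∫⁻ x, ENNReal.ofReal (h t (y - x)) = 1 := by
  rw [← ENNReal.ofReal_one]
  apply lint_of_integral one_ne_zero
  · filter_upwards with x
    exact h_nonneg ht _
  · rw [integral_sub_left_eq_self (fun x => h t x)]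
    unfold h
    rw [integral_const_mul]
    have : ∀ x, -Real.pi * x ^ 2 / t = -(Real.pi / t) * x ^ 2 := by intro x; ring
    simp_rw [this]
    rw [integral_gaussian]
    have : Real.pi / (Real.pi / t) = t := by field_simp
    rw [this, Real.sqrt_eq_rpow, ← Real.rpow_add ht]
    norm_num

lemma scale_lint {c : ℝ} (hc : 0 < c) (G : ℝ → ℝ≥0∞) (hG : Measurable G) :
    ∫⁻ x in Ioi (0:ℝ), G x = ENNReal.ofReal c * ∫⁻ x in Ioi (0:ℝ), G (c * x) := by
  rw [← lintegral_indicator measurableSet_Ioi, ← lintegral_indicator measurableSet_Ioi]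
  nth_rewrite 1 [← Real.smul_map_volume_mul_left hc.ne']
  rw [lintegral_smul_measure, lintegral_map (hG.indicator measurableSet_Ioi) (by fun_prop),
    abs_of_pos hc, smul_eq_mul]
  congr 2
  ext x
  simp only [indicator, mem_Ioi]
  simp [hc]

/-- the beta constant -/
noncomputable def K (a b : ℝ) : ℝ≥0∞ :=
  ∫⁻ u in Ioi (0:ℝ), ENNReal.ofReal (u ^ (b - 1) * (1 + u) ^ (-(a + b)))

lemma beta_conv (a b : ℝ) (F : ℝ → ℝ≥0∞) (hF : Measurable F) :
    ∫⁻ t in Ioi (0:ℝ), ∫⁻ s in Ioi (0:ℝ), ENNReal.ofReal (t ^ (a - 1) * s ^ (b - 1)) * F (t + s)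
      = K a b * ∫⁻ r in Ioi (0:ℝ), ENNReal.ofReal (r ^ (a + b - 1)) * F r := by
  calc _ = ∫⁻ t in Ioi (0:ℝ), ∫⁻ u in Ioi (0:ℝ),
        ENNReal.ofReal (u ^ (b - 1) * t ^ (a + b - 1)) * F (t * (1 + u)) := by
        apply setLIntegral_congr_fun measurableSet_Ioi
        intro t ht
        have ht : (0:ℝ) < t := ht
        simp only
        rw [scale_lint ht _ (by fun_prop), ← lintegral_const_mul _ (by fun_prop)]
        apply setLIntegral_congr_fun measurableSet_Ioi
        intro u hu
        have hu : (0:ℝ) < u := hu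
        simp only
        rw [← mul_assoc, ← ENNReal.ofReal_mul ht.le]
        congr 2
        · rw [Real.mul_rpow ht.le hu.le]
          have : t ^ (a + b - 1) = t * (t ^ (a - 1) * t ^ (b - 1)) := by
            rw [← Real.rpow_add ht]
            nth_rewrite 2 [← Real.rpow_one t]
            rw [← Real.rpow_add ht]
            ring_nf
          rw [this]; ring
        · ring
    _ = ∫⁻ u in Ioi (0:ℝ), ∫⁻ t in Ioi (0:ℝ),
        ENNReal.ofReal (u ^ (b - 1) * t ^ (a + b - 1)) * F (t * (1 + u)) := by
        apply lintegral_lintegral_swap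
        apply Measurable.aemeasurable
        unfold Function.uncurry
        fun_prop
    _ = ∫⁻ u in Ioi (0:ℝ), ENNReal.ofReal (u ^ (b - 1) * (1 + u) ^ (-(a + b))) *
          ∫⁻ r in Ioi (0:ℝ), ENNReal.ofReal (r ^ (a + b - 1)) * F r := by
        apply setLIntegral_congr_fun measurableSet_Ioi
        intro u hu
        have hu : (0:ℝ) < u := hu
        simp only
        have h1 : (0:ℝ) < 1 + u := by positivity
        rw [scale_lint h1 (fun r => ENNReal.ofReal (r ^ (a + b - 1)) * F r) (by fun_prop),
          ← lintegral_const_mul _ (by fun_prop), ← lintegral_const_mul _ (by fun_prop)]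
        apply setLIntegral_congr_fun measurableSet_Ioi
        intro t ht
        have ht : (0:ℝ) < t := ht
        simp only
        rw [← mul_assoc, ← mul_assoc, ← ENNReal.ofReal_mul (by positivity),
          ← ENNReal.ofReal_mul (by positivity), mul_comm t (1 + u), Real.mul_rpow h1.le ht.le]
        congr 2
        have : (1 + u) ^ (-(a + b)) * (1 + u) * (1 + u) ^ (a + b - 1) = 1 := by
          nth_rewrite 2 [← Real.rpow_one (1 + u)]
          rw [← Real.rpow_add h1, ← Real.rpow_add h1]
          ring_nf
          simp
        linear_combination (-(u ^ (b-1) * t ^ (a + b - 1))) * this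
    _ = _ := by
        rw [lintegral_mul_const _ (by fun_prop)]
        rfl

lemma K_eq {a b : ℝ} (ha : 0 < a) (hb : 0 < b) :
    K a b = ENNReal.ofReal (Real.Gamma a * Real.Gamma b / Real.Gamma (a + b)) := by
  have hGa := Real.Gamma_pos_of_pos ha
  have hGb := Real.Gamma_pos_of_pos hb
  have hGab := Real.Gamma_pos_of_pos (add_pos ha hb)
  have h0 := beta_conv a b (fun r => ENNReal.ofReal (Real.exp (-(1 * r)))) (by fun_prop)
  have h1 : ∫⁻ r in Ioi (0:ℝ), ENNReal.ofReal (r ^ (a + b - 1)) * ENNReal.ofReal (Real.exp (-(1 * r)))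
      = ENNReal.ofReal (Real.Gamma (a + b)) := by
    have := gamma_lint (add_pos ha hb) one_pos
    rw [Real.one_rpow, mul_one] at this
    rw [← this]
    apply setLIntegral_congr_fun measurableSet_Ioi
    intro t ht
    have ht : (0:ℝ) < t := ht
    simp only
    rw [← ENNReal.ofReal_mul (by positivity)]
  have h2 : ∫⁻ t in Ioi (0:ℝ), ∫⁻ s in Ioi (0:ℝ), ENNReal.ofReal (t ^ (a - 1) * s ^ (b - 1)) *
      ENNReal.ofReal (Real.exp (-(1 * (t + s)))) = ENNReal.ofReal (Real.Gamma a * Real.Gamma b) := by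
    have ea := gamma_lint ha one_pos
    have eb := gamma_lint hb one_pos
    rw [Real.one_rpow, mul_one] at ea eb
    rw [ENNReal.ofReal_mul hGa.le, ← ea, ← eb, ← lintegral_mul_const _ (by fun_prop)]
    apply setLIntegral_congr_fun measurableSet_Ioi
    intro t ht
    have ht : (0:ℝ) < t := ht
    simp only
    rw [← lintegral_const_mul _ (by fun_prop)]
    apply setLIntegral_congr_fun measurableSet_Ioi
    intro s hs
    have hs : (0:ℝ) < s := hs
    simp only
    rw [← ENNReal.ofReal_mul (by positivity), ← ENNReal.ofReal_mul (by positivity)]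
    congr 1
    rw [show -(1 * (t + s)) = -(1 * t) + -(1 * s) by ring, Real.exp_add]
    ring
  rw [h1, h2] at h0
  rw [ENNReal.ofReal_div_of_pos hGab, h0, ENNReal.mul_div_cancel_right]
  · simpa using hGab
  · exact ENNReal.ofReal_ne_top

lemma schur (u W : ℝ → ℝ) (hu : Measurable u) (hW : Measurable W) (hu0 : ∀ x, 0 ≤ u x)
    (hW0 : ∀ᵐ x, 0 < W x) (k : ℝ → ℝ≥0∞) (hk : Measurable k) (hke : ∀ x, k (-x) = k x)
    (T : ℝ → ℝ≥0∞) (hT : ∀ᵐ x, ∫⁻ y, k (x - y) * ENNReal.ofReal (W y) = T x) :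
    ∫⁻ x, ∫⁻ y, ENNReal.ofReal (u x) * ENNReal.ofReal (u y) * k (x - y) ≤
      ∫⁻ x, ENNReal.ofReal (u x ^ 2 / W x) * T x := by
  set E : ℝ → ℝ → ℝ≥0∞ := fun x y =>
    ENNReal.ofReal (u x ^ 2 / W x) * (k (x - y) * ENNReal.ofReal (W y)) with hE
  have hEm : Measurable (Function.uncurry E) := by
    simp only [hE]; unfold Function.uncurry; fun_prop
  have hJ : ∫⁻ x, ∫⁻ y, E x y = ∫⁻ x, ENNReal.ofReal (u x ^ 2 / W x) * T x := by
    apply lintegral_congr_ae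
    filter_upwards [hT] with x hx
    rw [← hx, ← lintegral_const_mul _ (by fun_prop)]
  have hJ' : ∫⁻ x, ∫⁻ y, E y x = ∫⁻ x, ∫⁻ y, E x y := by
    rw [lintegral_lintegral_swap hEm.aemeasurable]
  rw [← hJ]
  have h2 : 2 * ∫⁻ x, ∫⁻ y, ENNReal.ofReal (u x) * ENNReal.ofReal (u y) * k (x - y) ≤
      2 * ∫⁻ x, ∫⁻ y, E x y := by
    calc _ = ∫⁻ x, ∫⁻ y, 2 * (ENNReal.ofReal (u x) * ENNReal.ofReal (u y) * k (x - y)) := by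
          rw [← lintegral_const_mul' _ _ (by norm_num)]
          congr 1; ext x
          rw [← lintegral_const_mul' _ _ (by norm_num)]
      _ ≤ ∫⁻ x, ∫⁻ y, (E x y + E y x) := by
          apply lintegral_mono_ae
          filter_upwards [hW0] with x hx
          apply lintegral_mono_ae
          filter_upwards [hW0] with y hy
          simp only [hE]
          rw [← hke (y - x), neg_sub]
          have e1 : ENNReal.ofReal (u x ^ 2 / W x) * (k (x - y) * ENNReal.ofReal (W y)) +
              ENNReal.ofReal (u y ^ 2 / W y) * (k (x - y) * ENNReal.ofReal (W x)) =
              ENNReal.ofReal (u x ^ 2 / W x * W y + u y ^ 2 / W y * W x) * k (x - y) := by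
            rw [ENNReal.ofReal_add (by positivity) (by positivity),
              ENNReal.ofReal_mul (by positivity), ENNReal.ofReal_mul (by positivity)]
            ring
          rw [e1, ← mul_assoc]
          gcongr
          rw [← ENNReal.ofReal_mul (hu0 x), show (2:ℝ≥0∞) = ENNReal.ofReal 2 by simp,
            ← ENNReal.ofReal_mul (by norm_num)]
          apply ENNReal.ofReal_le_ofReal
          have : u x ^ 2 / W x * W y + u y ^ 2 / W y * W x - 2 * (u x * u y) =
              (u x * W y - u y * W x) ^ 2 / (W x * W y) := by
            field_simp
            ring
          have h3 : 0 ≤ (u x * W y - u y * W x) ^ 2 / (W x * W y) := by positivity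
          linarith
      _ = ∫⁻ x, ((∫⁻ y, E x y) + ∫⁻ y, E y x) := by
          congr 1; ext x
          exact lintegral_add_left hEm.of_uncurry_left _
      _ = (∫⁻ x, ∫⁻ y, E x y) + ∫⁻ x, ∫⁻ y, E y x := by
          exact lintegral_add_left hEm.lintegral_prod_right _
      _ = _ := by rw [hJ', two_mul]
  exact (ENNReal.mul_le_mul_iff_right (by norm_num) (by norm_num)).1 h2

lemma fourier_cont {g : ℝ → ℂ} (hg : Integrable g) : Continuous (𝓕 g) :=
  VectorFourier.fourierIntegral_continuous Real.continuous_fourierChar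
    (innerSL ℝ).continuous₂ hg

lemma fourier_bound (g : ℝ → ℂ) (ξ : ℝ) : ‖𝓕 g ξ‖ ≤ ∫ x, ‖g x‖ :=
  VectorFourier.norm_fourierIntegral_le_integral_norm _ _ _ _ _

lemma fourier_flip {f g : ℝ → ℂ} (hf : Integrable f) (hg : Integrable g) :
    ∫ ξ, 𝓕 f ξ * g ξ = ∫ x, f x * 𝓕 g x := by
  have := VectorFourier.integral_fourierIntegral_smul_eq_flip (L := innerₗ ℝ)
    (μ := volume) (ν := volume) Real.continuous_fourierChar (innerSL ℝ).continuous₂ hf hg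
  simp only [flip_innerₗ, smul_eq_mul] at this
  exact this

lemma gauss_int {t : ℝ} (ht : 0 < t) (x : ℝ) :
    Integrable (fun ξ : ℝ => Complex.exp (-Real.pi * (t:ℂ) * (ξ:ℂ) ^ 2 +
      2 * Real.pi * (Complex.I * x) * ξ)) := by
  have := integrable_cexp_quadratic (b := Real.pi * (t:ℂ)) (by
    rw [← Complex.ofReal_mul, Complex.ofReal_re]; positivity) (2 * Real.pi * (Complex.I * x)) 0
  simpa [neg_mul] using this

lemma fourier_gauss {t : ℝ} (ht : 0 < t) (x y : ℝ) :
    𝓕 (fun ξ : ℝ => Complex.exp (-Real.pi * (t:ℂ) * (ξ:ℂ) ^ 2 +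
      2 * Real.pi * (Complex.I * x) * ξ)) y = (h t (x - y) : ℂ) := by
  rw [fourier_gaussian_pi' (by simpa using ht)]
  simp only [h]
  push_cast
  rw [Complex.ofReal_cpow ht.le, one_div, ← Complex.cpow_neg]
  push_cast
  congr 2
  have : (y + Complex.I * (Complex.I * x) : ℂ) = y - x := by
    rw [← mul_assoc, Complex.I_mul_I]; ring
  rw [this]
  ring

lemma gauss_step {t : ℝ} (ht : 0 < t) {g : ℝ → ℂ} (hg : Integrable g) :
    ∫⁻ ξ, ENNReal.ofReal (Real.exp (-(Real.pi * ξ ^ 2 * t))) * ENNReal.ofReal (‖𝓕 g ξ‖ ^ 2) ≤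
      ∫⁻ x, ∫⁻ y, ENNReal.ofReal ‖g x‖ * ENNReal.ofReal ‖g y‖ * ENNReal.ofReal (h t (x - y)) := by
  set G : ℝ → ℝ → ℂ := fun x ξ => Complex.exp (-Real.pi * (t:ℂ) * (ξ:ℂ) ^ 2 +
      2 * Real.pi * (Complex.I * x) * ξ) with hG
  have hcont := fourier_cont hg
  have hGint := fun x => gauss_int ht x
  -- the conjugated function
  set v : ℝ → ℂ := fun ξ => G 0 ξ * (starRingEnd ℂ) (𝓕 g ξ) with hv
  have hvint : Integrable v := by
    apply (hGint 0).mul_bdd (c := ∫ x, ‖g x‖)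
    · exact (Complex.continuous_conj.comp hcont).aestronglyMeasurable
    · filter_upwards with ξ
      simpa using fourier_bound g ξ
  have hG0 : ∀ ξ, G 0 ξ = (Real.exp (-(Real.pi * ξ ^ 2 * t)) : ℂ) := by
    intro ξ
    simp only [hG]
    push_cast
    congr 1
    ring
  have hprod : ∀ ξ, 𝓕 g ξ * v ξ =
      ((Real.exp (-(Real.pi * ξ ^ 2 * t)) * ‖𝓕 g ξ‖ ^ 2 : ℝ) : ℂ) := by
    intro ξ
    simp only [hv, hG0]
    rw [mul_left_comm, Complex.mul_conj, Complex.normSq_eq_norm_sq]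
    push_cast
    ring
  have hFv : ∀ x, ‖𝓕 v x‖ₑ ≤ ∫⁻ y, ENNReal.ofReal ‖g y‖ * ENNReal.ofReal (h t (x - y)) := by
    intro x
    have e1 : 𝓕 v x = (starRingEnd ℂ) (∫ ξ, 𝓕 g ξ * G x ξ) := by
      rw [← integral_conj, Real.fourier_real_eq_integral_exp_smul]
      congr 1; ext ξ
      simp only [hv, hG, smul_eq_mul, map_mul, ← Complex.exp_conj]
      rw [← mul_assoc, ← Complex.exp_add, mul_comm]
      congr 2
      simp [Complex.conj_ofNat]
      ring
    have e2 : ∫ ξ, 𝓕 g ξ * G x ξ = ∫ y, g y * (h t (x - y) : ℂ) := by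
      rw [fourier_flip hg (hGint x)]
      congr 1; ext y
      rw [← fourier_gauss ht x y]
    rw [e1, e2, RCLike.enorm_conj]
    refine (enorm_integral_le_lintegral_enorm _).trans (le_of_eq ?_)
    congr 1; ext y
    rw [enorm_mul, ofReal_norm]
    congr 1
    rw [← ofReal_norm, Complex.norm_real, Real.norm_of_nonneg (h_nonneg ht _)]
  have hLint : Integrable (fun ξ => Real.exp (-(Real.pi * ξ ^ 2 * t)) * ‖𝓕 g ξ‖ ^ 2) := by
    have : Integrable (fun ξ => 𝓕 g ξ * v ξ) := by
      apply hvint.bdd_mul (c := ∫ x, ‖g x‖) hcont.aestronglyMeasurable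
      filter_upwards with ξ
      exact fourier_bound g ξ
    have := this.re
    simpa only [hprod, RCLike.re_to_complex, Complex.ofReal_re] using this
  calc _ = ∫⁻ ξ, ENNReal.ofReal (Real.exp (-(Real.pi * ξ ^ 2 * t)) * ‖𝓕 g ξ‖ ^ 2) := by
        congr 1; ext ξ
        rw [ENNReal.ofReal_mul (by positivity)]
    _ = ENNReal.ofReal (∫ ξ, Real.exp (-(Real.pi * ξ ^ 2 * t)) * ‖𝓕 g ξ‖ ^ 2) := by
        rw [ofReal_integral_eq_lintegral_ofReal hLint]
        filter_upwards with ξ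
        simp only [Pi.zero_apply]; positivity
    _ = ‖∫ ξ, 𝓕 g ξ * v ξ‖ₑ := by
        simp_rw [hprod]
        rw [integral_complex_ofReal, ← ofReal_norm, Complex.norm_real, Real.norm_of_nonneg]
        exact integral_nonneg (fun ξ => by positivity)
    _ = ‖∫ x, g x * 𝓕 v x‖ₑ := by rw [fourier_flip hg hvint]
    _ ≤ ∫⁻ x, ‖g x * 𝓕 v x‖ₑ := enorm_integral_le_lintegral_enorm _
    _ ≤ _ := by
        apply lintegral_mono
        intro x
        simp only
        rw [enorm_mul]
        calc _ ≤ ‖g x‖ₑ * _ := mul_le_mul_right (hFv x) _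
          _ = _ := by
            rw [← lintegral_const_mul' _ _ enorm_ne_top]
            congr 1; ext y
            rw [ofReal_norm, ofReal_norm, mul_assoc]

/-- Pitt for `0 < α < 1`. -/
lemma pitt_pos {α : ℝ} (h0 : 0 < α) (h1 : α < 1) {g : ℝ → ℂ} (hg : Integrable g)
    (hgm : Measurable g) :
    ∫⁻ ξ, ENNReal.ofReal (|ξ| ^ (-α)) * ENNReal.ofReal (‖𝓕 g ξ‖ ^ 2) ≤
      ENNReal.ofReal (Real.pi ^ α * (Real.Gamma ((1 - α) / 4) / Real.Gamma ((1 + α) / 4)) ^ 2) *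
      ∫⁻ x, ENNReal.ofReal (|x| ^ α * ‖g x‖ ^ 2) := by
  have hcont := fourier_cont hg
  have hm := h_meas
  have hΓ1 := Real.Gamma_pos_of_pos (show 0 < (1 - α) / 4 by linarith)
  have hΓ2 := Real.Gamma_pos_of_pos (show 0 < (1 + α) / 4 by linarith)
  have hΓ := Real.Gamma_pos_of_pos (show 0 < α / 2 by linarith)
  have hae : ∀ᵐ x : ℝ, x ≠ 0 := by
    simp [ae_iff]
  have pw : ∀ (x b : ℝ), x ≠ 0 → (Real.pi * x ^ 2) ^ b = Real.pi ^ b * |x| ^ (2 * b) := by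
    intro x b hx
    rw [Real.mul_rpow Real.pi_pos.le (by positivity), ← sq_abs, ← Real.rpow_natCast,
      ← Real.rpow_mul (abs_nonneg x)]
    norm_num
  -- kernel
  set k : ℝ → ℝ≥0∞ := fun x => ∫⁻ t in Ioi (0:ℝ), ENNReal.ofReal (t ^ (α / 2 - 1) * h t x) with hk
  have hmk : Measurable (fun z : ℝ × ℝ => ENNReal.ofReal (z.2 ^ (α / 2 - 1) * h z.2 z.1)) := by
    have : Measurable (fun z : ℝ × ℝ => h z.2 z.1) := hm.comp measurable_swap
    fun_prop
  have hkm : Measurable k := hmk.lintegral_prod_right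
  have hke : ∀ x, k (-x) = k x := by intro x; simp [hk, h]
  set W : ℝ → ℝ := fun x => (Real.Gamma ((1 + α) / 4) * (Real.pi * x ^ 2) ^ (-((1 + α) / 4))) with hW
  set T : ℝ → ℝ≥0∞ := fun x => K (α / 2) ((1 - α) / 4) * 
    ENNReal.ofReal (Real.Gamma ((1 - α) / 4) * (Real.pi * x ^ 2) ^ (-((1 - α) / 4))) with hTdef
  have hWR : ∀ x, x ≠ 0 → ENNReal.ofReal (W x) =
      ∫⁻ t in Ioi (0:ℝ), ENNReal.ofReal (t ^ ((1 - α) / 4 - 1) * h t x) := by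
    intro x hx
    rw [R_lint (by linarith) hx]
    simp only [hW]
    ring_nf
  have hTR : ∀ x, x ≠ 0 → T x = K (α / 2) ((1 - α) / 4) *
      ∫⁻ t in Ioi (0:ℝ), ENNReal.ofReal (t ^ (α / 2 + (1 - α) / 4 - 1)) * ENNReal.ofReal (h t x) := by
    intro x hx
    have := R_lint (a := α / 2 + (1 - α) / 4) (by linarith) hx
    simp only [hTdef]
    congr 1
    rw [show 1 / 2 - (α / 2 + (1 - α) / 4) = (1 - α) / 4 by ring,
      show α / 2 + (1 - α) / 4 - 1 / 2 = -((1 - α) / 4) by ring] at this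
    rw [← this]
    apply setLIntegral_congr_fun measurableSet_Ioi
    intro t ht
    have ht : (0:ℝ) < t := ht
    simp only
    rw [ENNReal.ofReal_mul (by positivity)]
  have hT : ∀ᵐ x, ∫⁻ y, k (x - y) * ENNReal.ofReal (W y) = T x := by
    filter_upwards [hae] with x hx
    rw [hTR x hx, ← beta_conv _ _ (fun t => ENNReal.ofReal (h t x))
      (ENNReal.measurable_ofReal.comp (hm.comp (measurable_id.prodMk measurable_const)))]
    have m1 : Measurable (fun z : ℝ × ℝ × ℝ => h z.2.1 (x - z.1)) :=
      hm.comp (f := fun z : ℝ × ℝ × ℝ => (z.2.1, x - z.1)) (by fun_prop)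
    have m2 : Measurable (fun z : ℝ × ℝ × ℝ => h z.2.2 z.1) :=
      hm.comp (f := fun z : ℝ × ℝ × ℝ => (z.2.2, z.1)) (by fun_prop)
    have m3 : Measurable (fun z : ℝ × ℝ × ℝ =>
        ENNReal.ofReal (z.2.1 ^ (α / 2 - 1) * h z.2.1 (x - z.1)) *
        ENNReal.ofReal (z.2.2 ^ ((1 - α) / 4 - 1) * h z.2.2 z.1)) := by fun_prop
    calc _ = ∫⁻ y, ∫⁻ t in Ioi (0:ℝ), ∫⁻ s in Ioi (0:ℝ),
          ENNReal.ofReal (t ^ (α / 2 - 1) * h t (x - y)) *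
          ENNReal.ofReal (s ^ ((1 - α) / 4 - 1) * h s y) := by
          apply lintegral_congr_ae
          filter_upwards [hae] with y hy
          simp only [hk]
          rw [hWR y hy, ← lintegral_mul_const]
          · congr 1; ext t
            rw [← lintegral_const_mul' _ _ ENNReal.ofReal_ne_top]
          · exact hmk.comp (measurable_const.prodMk measurable_id)
      _ = ∫⁻ t in Ioi (0:ℝ), ∫⁻ y, ∫⁻ s in Ioi (0:ℝ),
          ENNReal.ofReal (t ^ (α / 2 - 1) * h t (x - y)) *
          ENNReal.ofReal (s ^ ((1 - α) / 4 - 1) * h s y) := by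
          apply lintegral_lintegral_swap
          apply Measurable.aemeasurable
          exact (m3.comp MeasurableEquiv.prodAssoc.measurable).lintegral_prod_right'
      _ = _ := by
          apply setLIntegral_congr_fun measurableSet_Ioi
          intro t ht
          have ht : (0:ℝ) < t := ht
          simp only
          rw [lintegral_lintegral_swap]
          · apply setLIntegral_congr_fun measurableSet_Ioi
            intro s hs
            have hs : (0:ℝ) < s := hs
            simp only
            rw [← heat_semigroup ht hs, ← lintegral_const_mul' _ _ ENNReal.ofReal_ne_top]
            congr 1; ext y
            have := h_nonneg ht (x - y)
            have := h_nonneg hs y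
            rw [← ENNReal.ofReal_mul (by positivity), ← ENNReal.ofReal_mul (by positivity)]
            congr 1; ring
          · exact (m3.comp (g := _) (f := fun z : ℝ × ℝ => (z.1, t, z.2))
              (by fun_prop)).aemeasurable
  have hS := schur (fun x => ‖g x‖) W (by fun_prop) (by fun_prop) (fun x => norm_nonneg _)
    (by filter_upwards [hae] with x hx
        simp only [hW]; positivity) k hkm hke T hT
  -- left side
  have hL : ENNReal.ofReal (Real.Gamma (α / 2) * Real.pi ^ (-(α / 2))) *
      ∫⁻ ξ, ENNReal.ofReal (|ξ| ^ (-α)) * ENNReal.ofReal (‖𝓕 g ξ‖ ^ 2) ≤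
      ∫⁻ x, ∫⁻ y, ENNReal.ofReal ‖g x‖ * ENNReal.ofReal ‖g y‖ * k (x - y) := by
    calc _ = ∫⁻ ξ, ∫⁻ t in Ioi (0:ℝ), ENNReal.ofReal (t ^ (α / 2 - 1)) *
          (ENNReal.ofReal (Real.exp (-(Real.pi * ξ ^ 2 * t))) * ENNReal.ofReal (‖𝓕 g ξ‖ ^ 2)) := by
          rw [← lintegral_const_mul' _ _ ENNReal.ofReal_ne_top]
          apply lintegral_congr_ae
          filter_upwards [hae] with ξ hξ
          have := gamma_lint (show 0 < α / 2 by linarith) (show 0 < Real.pi * ξ ^ 2 by positivity)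
          rw [pw ξ _ hξ, ← mul_assoc, show 2 * -(α / 2) = -α by ring,
            ENNReal.ofReal_mul (by positivity)] at this
          rw [← mul_assoc, ← this, ← lintegral_mul_const' _ _ ENNReal.ofReal_ne_top]
          apply setLIntegral_congr_fun measurableSet_Ioi
          intro t ht
          have ht : (0:ℝ) < t := ht
          simp only
          rw [ENNReal.ofReal_mul (by positivity), mul_assoc]
      _ = ∫⁻ t in Ioi (0:ℝ), ∫⁻ ξ, ENNReal.ofReal (t ^ (α / 2 - 1)) *
          (ENNReal.ofReal (Real.exp (-(Real.pi * ξ ^ 2 * t))) * ENNReal.ofReal (‖𝓕 g ξ‖ ^ 2)) := by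
          apply lintegral_lintegral_swap
          apply Measurable.aemeasurable
          have := hcont.measurable
          unfold Function.uncurry
          fun_prop
      _ ≤ ∫⁻ t in Ioi (0:ℝ), ENNReal.ofReal (t ^ (α / 2 - 1)) * ∫⁻ x, ∫⁻ y,
            ENNReal.ofReal ‖g x‖ * ENNReal.ofReal ‖g y‖ * ENNReal.ofReal (h t (x - y)) := by
          apply setLIntegral_mono' measurableSet_Ioi
          intro t ht
          rw [lintegral_const_mul' _ _ ENNReal.ofReal_ne_top]
          refine mul_le_mul_right ?_ _
          exact gauss_step ht hg
      _ = ∫⁻ t in Ioi (0:ℝ), ∫⁻ x, ∫⁻ y,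
            ENNReal.ofReal ‖g x‖ * ENNReal.ofReal ‖g y‖ * ENNReal.ofReal (t ^ (α / 2 - 1) * h t (x - y)) := by
          apply setLIntegral_congr_fun measurableSet_Ioi
          intro t ht
          have ht : (0:ℝ) < t := ht
          simp only
          rw [← lintegral_const_mul' _ _ ENNReal.ofReal_ne_top]
          congr 1; ext x
          rw [← lintegral_const_mul' _ _ ENNReal.ofReal_ne_top]
          congr 1; ext y
          rw [ENNReal.ofReal_mul (p := t ^ (α / 2 - 1)) (by positivity)]
          ring
      _ = _ := by
          have m1 : Measurable (fun z : ℝ × ℝ × ℝ => h z.1 (z.2.1 - z.2.2)) :=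
            hm.comp (f := fun z : ℝ × ℝ × ℝ => (z.1, z.2.1 - z.2.2)) (by fun_prop)
          have m3 : Measurable (fun z : ℝ × ℝ × ℝ =>
            ENNReal.ofReal ‖g z.2.1‖ * ENNReal.ofReal ‖g z.2.2‖ *
              ENNReal.ofReal (z.1 ^ (α / 2 - 1) * h z.1 (z.2.1 - z.2.2))) := by fun_prop
          rw [lintegral_lintegral_swap]
          · congr 1; ext x
            rw [lintegral_lintegral_swap]
            · congr 1; ext y
              simp only [hk]
              rw [← lintegral_const_mul' _ _ (by finiteness)]
            · exact (m3.comp (g := _) (f := fun z : ℝ × ℝ => (z.1, x, z.2))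
                (by fun_prop)).aemeasurable
          · apply Measurable.aemeasurable
            exact (m3.comp MeasurableEquiv.prodAssoc.measurable).lintegral_prod_right'
  have hR : ∫⁻ x, ENNReal.ofReal (‖g x‖ ^ 2 / W x) * T x =
      ENNReal.ofReal (Real.Gamma (α / 2) * Real.pi ^ (-(α / 2))) *
      (ENNReal.ofReal (Real.pi ^ α * (Real.Gamma ((1 - α) / 4) / Real.Gamma ((1 + α) / 4)) ^ 2) *
      ∫⁻ x, ENNReal.ofReal (|x| ^ α * ‖g x‖ ^ 2)) := by
    rw [← mul_assoc, ← ENNReal.ofReal_mul (by positivity),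
      ← lintegral_const_mul' _ _ ENNReal.ofReal_ne_top]
    apply lintegral_congr_ae
    filter_upwards [hae] with x hx
    simp only [hTdef, hW]
    rw [K_eq (by linarith) (by linarith), ← ENNReal.ofReal_mul (by positivity),
      ← ENNReal.ofReal_mul (by positivity), ← ENNReal.ofReal_mul (by positivity)]
    congr 1
    rw [show α / 2 + (1 - α) / 4 = (1 + α) / 4 by ring]
    have hc : 0 < Real.pi * x ^ 2 := by positivity
    have e1 : (Real.pi * x ^ 2) ^ (-((1 - α) / 4)) =
        (Real.pi * x ^ 2) ^ (-((1 + α) / 4)) * (Real.pi * x ^ 2) ^ (α / 2) := by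
      rw [← Real.rpow_add hc]; ring_nf
    have e2 : Real.pi ^ α = Real.pi ^ (α / 2) * Real.pi ^ (α / 2) := by
      rw [← Real.rpow_add Real.pi_pos]; ring_nf
    rw [e1, pw x (α / 2) hx, e2, Real.rpow_neg Real.pi_pos.le, show 2 * (α / 2) = α by ring]
    have : 0 < (Real.pi * x ^ 2) ^ (-((1 + α) / 4)) := by positivity
    have : 0 < Real.pi ^ (α / 2) := by positivity
    field_simp
  have := hL.trans (hS.trans_eq hR)
  refine (ENNReal.mul_le_mul_iff_right ?_ ENNReal.ofReal_ne_top).1 this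
  simp only [ne_eq, ENNReal.ofReal_eq_zero, not_le]
  positivity

/-- `α = 0`. -/
lemma pitt_zero {g : ℝ → ℂ} (hg : Integrable g) (hgm : Measurable g) :
    ∫⁻ ξ, ENNReal.ofReal (‖𝓕 g ξ‖ ^ 2) ≤ ∫⁻ x, ENNReal.ofReal (‖g x‖ ^ 2) := by
  have hcont := fourier_cont hg
  have hm := h_meas
  have key : ∀ n : ℕ, ∫⁻ ξ, ENNReal.ofReal (Real.exp (-(Real.pi * ξ ^ 2 * (1 / ((n:ℝ) + 1))))) *
      ENNReal.ofReal (‖𝓕 g ξ‖ ^ 2) ≤ ∫⁻ x, ENNReal.ofReal (‖g x‖ ^ 2) := by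
    intro n
    have ht : (0:ℝ) < 1 / ((n:ℝ) + 1) := by positivity
    refine (gauss_step ht hg).trans ?_
    have := schur (fun x => ‖g x‖) (fun _ => 1) (by fun_prop) (by fun_prop)
      (fun x => norm_nonneg _) (by simp) (fun x => ENNReal.ofReal (h (1 / ((n:ℝ) + 1)) x))
      (ENNReal.measurable_ofReal.comp (hm.comp (measurable_const.prodMk measurable_id)))
      (by intro x; simp [h]) (fun _ => 1)
      (by filter_upwards with x
          simp only [ENNReal.ofReal_one, mul_one]
          exact h_total ht x)
    simpa using this
  have hlim : ∀ ξ, Filter.Tendsto (fun n : ℕ =>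
      ENNReal.ofReal (Real.exp (-(Real.pi * ξ ^ 2 * (1 / ((n:ℝ) + 1))))) *
      ENNReal.ofReal (‖𝓕 g ξ‖ ^ 2)) Filter.atTop (nhds (ENNReal.ofReal (‖𝓕 g ξ‖ ^ 2))) := by
    intro ξ
    have h1 := (tendsto_one_div_add_atTop_nhds_zero_nat (𝕜 := ℝ)).const_mul (Real.pi * ξ ^ 2)
    have h2 := ENNReal.tendsto_ofReal ((Real.continuous_exp.tendsto _).comp h1.neg)
    have h3 := ENNReal.Tendsto.mul_const (b := ENNReal.ofReal (‖𝓕 g ξ‖ ^ 2)) h2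
      (Or.inr ENNReal.ofReal_ne_top)
    simpa using h3
  calc _ = ∫⁻ ξ, Filter.liminf (fun n : ℕ =>
      ENNReal.ofReal (Real.exp (-(Real.pi * ξ ^ 2 * (1 / ((n:ℝ) + 1))))) *
      ENNReal.ofReal (‖𝓕 g ξ‖ ^ 2)) Filter.atTop := by
        congr 1; ext ξ
        exact (hlim ξ).liminf_eq.symm
    _ ≤ Filter.liminf (fun n : ℕ => ∫⁻ ξ,
      ENNReal.ofReal (Real.exp (-(Real.pi * ξ ^ 2 * (1 / ((n:ℝ) + 1))))) *
      ENNReal.ofReal (‖𝓕 g ξ‖ ^ 2)) Filter.atTop := by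
        apply lintegral_liminf_le
        intro n
        have := hcont.measurable
        fun_prop
    _ ≤ _ := by
        apply Filter.liminf_le_of_le
        · exact Filter.isBounded_ge_of_bot
        · intro b hb
          obtain ⟨n, hn⟩ := hb.exists
          exact hn.trans (key n)

lemma pitt {α : ℝ} (h0 : 0 ≤ α) (h1 : α < 1) {g : ℝ → ℂ} (hg : Integrable g)
    (hgm : Measurable g) :
    ∫⁻ ξ, ENNReal.ofReal (|ξ| ^ (-α) * ‖𝓕 g ξ‖ ^ 2) ≤
      ENNReal.ofReal (Real.pi ^ α * (Real.Gamma ((1 - α) / 4) / Real.Gamma ((1 + α) / 4)) ^ 2) *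
      ∫⁻ x, ENNReal.ofReal (|x| ^ α * ‖g x‖ ^ 2) := by
  rcases h0.eq_or_lt with rfl | h0
  · have hΓ := Real.Gamma_pos_of_pos (show (0:ℝ) < 1 / 4 by norm_num)
    have := pitt_zero hg hgm
    simpa [div_self hΓ.ne', div_self (show Real.Gamma (4⁻¹) ≠ 0 by simpa using hΓ.ne')] using this
  · refine le_trans (le_of_eq ?_) (pitt_pos h0 h1 hg hgm)
    congr 1; ext ξ
    rw [ENNReal.ofReal_mul (by positivity)]


lemma pitt_real {α : ℝ} (h0 : 0 ≤ α) (h1 : α < 1) {g : ℝ → ℂ} (hg : Integrable g)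
    (hgm : Measurable g) (hgi : Integrable (fun x => |x| ^ α * ‖g x‖ ^ 2)) :
    ∫ ξ, |ξ| ^ (-α) * ‖𝓕 g ξ‖ ^ 2 ≤
      (Real.pi ^ α * (Real.Gamma ((1 - α) / 4) / Real.Gamma ((1 + α) / 4)) ^ 2) *
      ∫ x, |x| ^ α * ‖g x‖ ^ 2 := by
  have hcont := (fourier_cont hg).measurable
  have key := pitt h0 h1 hg hgm
  rw [← ofReal_integral_eq_lintegral_ofReal hgi
    (Filter.Eventually.of_forall fun x => by simp only [Pi.zero_apply]; positivity),
    ← ENNReal.ofReal_mul (by positivity)] at key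
  rw [integral_eq_lintegral_of_nonneg_ae
    (Filter.Eventually.of_forall fun x => by simp only [Pi.zero_apply]; positivity)
    (Measurable.aestronglyMeasurable (by fun_prop))]
  apply ENNReal.toReal_le_of_le_ofReal _ key
  apply mul_nonneg (by positivity)
  exact integral_nonneg fun x => by simp only [Pi.zero_apply]; positivity

lemma schwartz_int {α : ℝ} (h0 : 0 ≤ α) (h1 : α < 1) (f : SchwartzMap ℝ ℂ) :
    Integrable (fun x => |x| ^ α * ‖f x‖ ^ 2) := by
  have i0 := f.integrable_pow_mul volume 0
  have i1 := f.integrable_pow_mul volume 1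
  obtain ⟨M, hM⟩ : ∃ M, ∀ x, ‖f x‖ ≤ M := by
    obtain ⟨M, hM⟩ := f.decay 0 0
    exact ⟨M, fun x => by simpa using hM.2 x⟩
  have hf := f.continuous.measurable
  have hM0 : 0 ≤ M := (norm_nonneg _).trans (hM 0)
  refine ((i0.add i1).const_mul M).mono' (Measurable.aestronglyMeasurable (by fun_prop)) ?_
  filter_upwards with x
  rw [Real.norm_of_nonneg (by positivity)]
  simp only [Pi.add_apply, pow_zero, one_mul, pow_one, Real.norm_eq_abs]
  have hx : |x| ^ α ≤ 1 + |x| := by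
    rcases le_total |x| 1 with h | h
    · have := Real.rpow_le_one (abs_nonneg x) h h0
      have := abs_nonneg x
      linarith
    · have := Real.rpow_le_rpow_of_exponent_le h h1.le
      rw [Real.rpow_one] at this
      linarith
  calc |x| ^ α * ‖f x‖ ^ 2 ≤ (1 + |x|) * (M * ‖f x‖) := by
        gcongr
        rw [sq]
        gcongr
        exact hM x
    _ = _ := by ring

/-- The chirped function. -/
noncomputable def chirp (A B p : ℝ) (f : ℝ → ℂ) (x : ℝ) : ℂ :=
  f x * Complex.exp (((A * x ^ 2 + 2 * x * p) / (2 * B) : ℝ) * Complex.I)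

lemma chirp_norm (A B p : ℝ) (f : ℝ → ℂ) (x : ℝ) : ‖chirp A B p f x‖ = ‖f x‖ := by
  unfold chirp
  rw [norm_mul, Complex.norm_exp_ofReal_mul_I, mul_one]

lemma saft_norm (A B D p q : ℝ) (hB : B ≠ 0) (f : ℝ → ℂ) (ω : ℝ) :
    ‖SAFT A B D p q f ω‖ ^ 2 =
      |2 * Real.pi * B|⁻¹ * ‖𝓕 (chirp A B p f) (ω / (2 * Real.pi * B))‖ ^ 2 := by
  have hBc : (B : ℂ) ≠ 0 := by exact_mod_cast hB
  have hpi : (Real.pi : ℂ) ≠ 0 := by exact_mod_cast Real.pi_ne_zero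
  have e : ∫ x : ℝ, f x * Complex.exp ((Complex.I / (2 * (B : ℂ))) *
      ((A : ℂ) * (x : ℂ) ^ 2 + 2 * (x : ℂ) * ((p : ℂ) - (ω : ℂ))
        - 2 * (ω : ℂ) * ((D : ℂ) * (p : ℂ) - (B : ℂ) * (q : ℂ))
        + (D : ℂ) * (ω : ℂ) ^ 2)) =
      Complex.exp (((-2 * ω * (D * p - B * q) + D * ω ^ 2) / (2 * B) : ℝ) * Complex.I) *
        𝓕 (chirp A B p f) (ω / (2 * Real.pi * B)) := by
    rw [Real.fourier_real_eq_integral_exp_smul, ← integral_const_mul]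
    congr 1; ext x
    simp only [chirp, smul_eq_mul]
    rw [mul_left_comm (Complex.exp _) (f x), mul_left_comm (Complex.exp _) (f x),
      ← Complex.exp_add, ← Complex.exp_add]
    congr 2
    push_cast
    field_simp
    ring
  unfold SAFT
  rw [e, norm_mul, norm_mul, Complex.norm_exp_ofReal_mul_I, one_mul, mul_pow, norm_inv,
    Complex.norm_real, Real.norm_of_nonneg (Real.sqrt_nonneg _), inv_pow,
    Real.sq_sqrt (by positivity), abs_mul, abs_of_pos (show 0 < 2 * Real.pi by positivity)]

end SaftPitt

/-- Pitt's inequality for the special affine Fourier transform, for Schwartz functions. -/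
theorem saft_pitt (A B C D p q : ℝ) (hΛ : A * D - B * C = 1) (hB : B ≠ 0)
    (α : ℝ) (hα0 : 0 ≤ α) (hα1 : α < 1)
    (f : SchwartzMap ℝ ℂ) :
    |B| ^ α * ∫ ω : ℝ, |ω| ^ (-α) * ‖SAFT A B D p q (fun x => f x) ω‖ ^ 2
      ≤ (Real.pi ^ α *
          (Real.Gamma ((1 - α) / 4) / Real.Gamma ((1 + α) / 4)) ^ 2) *
        ∫ x : ℝ, |x| ^ α * ‖f x‖ ^ 2 := by
  set g : ℝ → ℂ := SaftPitt.chirp A B p (fun x => f x) with hg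
  have hgn : ∀ x, ‖g x‖ = ‖f x‖ := SaftPitt.chirp_norm A B p _
  have hgc : Continuous g := by
    have := f.continuous
    simp only [hg]
    unfold SaftPitt.chirp
    fun_prop
  have hgint : Integrable g :=
    (f.integrable (μ := volume)).mono hgc.aestronglyMeasurable
      (Filter.Eventually.of_forall fun x => (hgn x).le)
  have hP := SaftPitt.pitt_real hα0 hα1 hgint hgc.measurable
    (by simp_rw [hgn]; exact SaftPitt.schwartz_int hα0 hα1 f)
  simp_rw [hgn] at hP
  refine le_trans ?_ hP
  set c : ℝ := 2 * Real.pi * B with hc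
  have hc0 : c ≠ 0 := by simp [hc, hB, Real.pi_ne_zero]
  have hca : 0 < |c| := abs_pos.2 hc0
  have e : ∫ ω : ℝ, |ω| ^ (-α) * ‖SAFT A B D p q (fun x => f x) ω‖ ^ 2 =
      |c| ^ (-α) * ∫ ξ, |ξ| ^ (-α) * ‖FourierTransform.fourier g ξ‖ ^ 2 := by
    have h1 : ∀ ω : ℝ, |ω| ^ (-α) * ‖SAFT A B D p q (fun x => f x) ω‖ ^ 2 =
        (fun ξ => (|c| ^ (-α) * |c|⁻¹) *
          (|ξ| ^ (-α) * ‖FourierTransform.fourier g ξ‖ ^ 2)) (ω / c) := by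
      intro ω
      simp only
      rw [SaftPitt.saft_norm A B D p q hB]
      have : |ω| ^ (-α) = |c| ^ (-α) * |ω / c| ^ (-α) := by
        rw [← Real.mul_rpow (abs_nonneg _) (abs_nonneg _), ← abs_mul, mul_div_cancel₀ _ hc0]
      rw [this]
      ring
    simp_rw [h1]
    rw [Measure.integral_comp_div (fun ξ => (|c| ^ (-α) * |c|⁻¹) *
          (|ξ| ^ (-α) * ‖FourierTransform.fourier g ξ‖ ^ 2)), integral_const_mul, smul_eq_mul]
    field_simp
  rw [e, ← mul_assoc]
  have hI : 0 ≤ ∫ ξ, |ξ| ^ (-α) * ‖FourierTransform.fourier g ξ‖ ^ 2 :=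
    integral_nonneg fun x => by simp only [Pi.zero_apply]; positivity
  have hle : |B| ^ α * |c| ^ (-α) ≤ 1 := by
    rw [Real.rpow_neg (abs_nonneg _), ← div_eq_mul_inv]
    apply div_le_one_of_le₀ _ (by positivity)
    apply Real.rpow_le_rpow (abs_nonneg _) _ hα0
    rw [hc, abs_mul, abs_of_pos (show 0 < 2 * Real.pi by positivity)]
    have := Real.pi_gt_three
    nlinarith [abs_nonneg B]
  exact mul_le_of_le_one_left hI hle
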